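/- Bound on the mix-term convolution integral I_j. Let M > 0, c₁, c₂ ∈ ℝ with c₁ ≠ c₂, and j ∈ {0,1}. Then there exists a constant C > 0 such that for every x ∈ ℝ and every t ≥ 0: ∫_0^t ∫_ℝ exp( −2(x−y+c₁(t−s))²/(M(t−s)) − (y+c₁s)²/(M(1+s)) − (y+c₂s)²/(M(1+s)) ) / ( (1+s)(t−s)^{(1+j)/2} ) dy ds ≤ C e^{−(x+c₁t)²/(M(1+t))} / (1+t)^{(1+j)/2}. -/

import Mathlib

open MeasureTheory Set

noncomputable section

/-!
Completing the square, the `y`-integral is a product of two Gaussians and equals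
`√(π M σ τ / (2 (σ + τ)))`, where `σ = 1 + s` and `τ = t - s`, times the exponential of
`-(x + c₁ t)² / (M (1 + t)) - (x + c₁ (t - s) + c₂ s)² / (M (1 + t)) - κ s² τ / (σ (1 + t))`,
with `κ = (c₁ - c₂)² / (2 M) > 0`. The first term is the one wanted and the second is dropped.
Since `s² τ / (σ (1 + t))` is at least half the distance from `s` to the endpoints of `(0, t)`, up
to an additive constant, the third gives exponential decay away from both endpoints. Relative to
`(1 + t) ^ (-α)`, with `α = (1 + j) / 2`, the prefactor is at most a multiple of `1 + τ ^ (-1/2)`,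
so its product with this decay has an integral over `(0, t)` bounded uniformly in `t`.
-/

theorem integral_exp_neg_mul_sq_sub_mul_sq {a b : ℝ} (hab : 0 < a + b) (p q : ℝ) :
    ∫ y : ℝ, Real.exp (-a * (y - p) ^ 2 - b * (y - q) ^ 2) =
      √(Real.pi / (a + b)) * Real.exp (-(a * b / (a + b)) * (p - q) ^ 2) := by
  have complete_square (y : ℝ) : -a * (y - p) ^ 2 - b * (y - q) ^ 2 =
      -(a + b) * (y - (a * p + b * q) / (a + b)) ^ 2 + -(a * b / (a + b)) * (p - q) ^ 2 := by
    field_simp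
    ring
  simp_rw [complete_square, Real.exp_add]
  rw [integral_mul_const, integral_sub_right_eq_self (fun y ↦ Real.exp (-(a + b) * y ^ 2)),
    integral_gaussian]

theorem setIntegral_Ioo_le_of_le_comp_min {F f : ℝ → ℝ} {t : ℝ} (hf : IntegrableOn f (Ioi 0))
    (hf_nonneg : ∀ u, 0 < u → 0 ≤ f u) (hF_nonneg : ∀ s ∈ Ioo 0 t, 0 ≤ F s)
    (hFf : ∀ s ∈ Ioo 0 t, F s ≤ f (min s (t - s))) :
    ∫ s in Ioo 0 t, F s ≤ 2 * ∫ u in Ioi 0, f u := by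
  have hf_Ioo : IntegrableOn f (Ioo 0 t) := hf.mono_set Ioo_subset_Ioi_self
  have reflect := volume.measurePreserving_sub_left t
  have reflect_emb := (MeasurableEquiv.subLeft t).measurableEmbedding
  have preimage_Ioo : (fun s ↦ t - s) ⁻¹' Ioo 0 t = Ioo 0 t := by simp
  have hf_reflect : IntegrableOn (fun s ↦ f (t - s)) (Ioo 0 t) := by
    have := (reflect.integrableOn_comp_preimage reflect_emb).2 hf_Ioo
    rwa [preimage_Ioo] at this
  have integral_reflect : ∫ s in Ioo 0 t, f (t - s) = ∫ s in Ioo 0 t, f s := by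
    have := reflect.setIntegral_preimage_emb reflect_emb f (Ioo 0 t)
    rwa [preimage_Ioo] at this
  have le_add : ∀ s ∈ Ioo 0 t, F s ≤ f s + f (t - s) := fun s hs ↦ by
    have h_left := hf_nonneg s hs.1
    have h_right := hf_nonneg (t - s) (sub_pos.2 hs.2)
    refine (hFf s hs).trans ?_
    rcases min_choice s (t - s) with h | h <;> rw [h] <;> linarith
  calc ∫ s in Ioo 0 t, F s
      ≤ ∫ s in Ioo 0 t, (f s + f (t - s)) :=
        integral_mono_of_nonneg (ae_restrict_of_forall_mem measurableSet_Ioo hF_nonneg)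
          (hf_Ioo.add hf_reflect) (ae_restrict_of_forall_mem measurableSet_Ioo le_add)
    _ = 2 * ∫ s in Ioo 0 t, f s := by
        rw [integral_add hf_Ioo hf_reflect, integral_reflect, two_mul]
    _ ≤ 2 * ∫ u in Ioi 0, f u := by
        refine mul_le_mul_of_nonneg_left ?_ zero_le_two
        exact setIntegral_mono_set hf (ae_restrict_of_forall_mem measurableSet_Ioi hf_nonneg)
          Ioo_subset_Ioi_self.eventuallyLE

/-- The profile `e^{-cu} (1 + u^{-1/2})`, which dominates the convolution integrand at distance `u`
from the endpoints of the time interval. -/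
def decayProfile (c u : ℝ) : ℝ := Real.exp (-c * u) * (1 + (√u)⁻¹)

theorem decayProfile_nonneg (c u : ℝ) : 0 ≤ decayProfile c u := by
  unfold decayProfile
  positivity

theorem integrableOn_decayProfile {c : ℝ} (hc : 0 < c) :
    IntegrableOn (decayProfile c) (Ioi 0) := by
  have h_exp := exp_neg_integrableOn_Ioi 0 hc
  have h_sing := integrableOn_rpow_mul_exp_neg_mul_rpow (p := 1) (s := -(1 / 2))
    (by norm_num) one_pos hc
  refine (h_exp.add h_sing).congr_fun (fun u hu ↦ ?_) measurableSet_Ioi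
  simp only [decayProfile, Pi.add_apply, Real.rpow_one, Real.rpow_neg (mem_Ioi.1 hu).le,
    Real.sqrt_eq_rpow]
  ring

theorem half_min_sub_two_le_sq_mul_sub_div {s t : ℝ} (hs : 0 < s) (hst : s < t) :
    min s (t - s) / 2 - 2 ≤ s ^ 2 * (t - s) / ((1 + s) * (1 + t)) := by
  have ht : 0 < 1 + t := by linarith
  have h_min : min s (t - s) / 2 - 1 ≤ s * (t - s) / (1 + t) := by
    rw [le_div_iff₀ ht]
    rcases le_total s (t - s) with h | h
    · rw [min_eq_left h]
      nlinarith
    · rw [min_eq_right h]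
      nlinarith
  have h_error : s * (t - s) / ((1 + s) * (1 + t)) ≤ 1 := by
    refine div_le_one_of_le₀ ?_ (by positivity)
    gcongr <;> linarith
  have h_split : s ^ 2 * (t - s) / ((1 + s) * (1 + t)) =
      s * (t - s) / (1 + t) - s * (t - s) / ((1 + s) * (1 + t)) := by
    field_simp
    ring
  linarith

theorem exp_neg_mul_sq_mul_sub_div_le {κ s t : ℝ} (hκ : 0 ≤ κ) (hs : 0 < s) (hst : s < t) :
    Real.exp (-(κ * (s ^ 2 * (t - s) / ((1 + s) * (1 + t))))) ≤
      Real.exp (2 * κ) * Real.exp (-(κ / 2) * min s (t - s)) := by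
  have := mul_le_mul_of_nonneg_left (half_min_sub_two_le_sq_mul_sub_div hs hst) hκ
  rw [← Real.exp_add]
  gcongr
  linarith

theorem sqrt_mul_div_add_div_mul_rpow_le {σ τ α : ℝ} (hσ : 1 ≤ σ) (hτ : 0 < τ) (hα : α ≤ 1) :
    √(σ * τ / (σ + τ)) / (σ * τ ^ α) ≤ (1 + (√τ)⁻¹) / (σ + τ) ^ α := by
  set h := σ * τ / (σ + τ) with h_def
  have : 0 < σ := by positivity
  have h_ratio : (σ + τ) ^ α / τ ^ α ≤ (σ + τ) / τ := by
    rw [← Real.div_rpow (by positivity) hτ.le]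
    exact Real.rpow_le_self_of_one_le ((one_le_div hτ).2 (by linarith)) hα
  have h_sqrt : √h / h ≤ 1 + (√τ)⁻¹ := by
    rw [Real.sqrt_div_self, ← Real.sqrt_inv, ← Real.sqrt_inv]
    refine Real.sqrt_le_iff.2 ⟨by positivity, ?_⟩
    calc h⁻¹ = σ⁻¹ + τ⁻¹ := by rw [h_def]; field_simp; ring
      _ ≤ 1 + √τ⁻¹ ^ 2 := by
          rw [Real.sq_sqrt (by positivity)]
          gcongr
          exact inv_le_one_of_one_le₀ hσ
      _ ≤ (1 + √τ⁻¹) ^ 2 := by nlinarith [Real.sqrt_nonneg τ⁻¹]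
  calc √h / (σ * τ ^ α)
      = √h / σ * ((σ + τ) ^ α / τ ^ α) / (σ + τ) ^ α := by field_simp
    _ ≤ √h / σ * ((σ + τ) / τ) / (σ + τ) ^ α := by gcongr
    _ = √h / h / (σ + τ) ^ α := by rw [h_def]; field_simp
    _ ≤ (1 + (√τ)⁻¹) / (σ + τ) ^ α := by gcongr

section MixTerm

variable {M c₁ c₂ s t : ℝ}

/-- The exponent in the mix-term integral: a heat kernel moving at speed `c₁` from time `s` to
time `t`, against the product of two Gaussians moving at the speeds `c₁` and `c₂`. -/
def mixExponent (M c₁ c₂ x t s y : ℝ) : ℝ :=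
  -(2 * (x - y + c₁ * (t - s)) ^ 2) / (M * (t - s)) -
    (y + c₁ * s) ^ 2 / (M * (1 + s)) - (y + c₂ * s) ^ 2 / (M * (1 + s))

/-- The rate `κ` at which the separation of the speeds `c₁` and `c₂` makes the mix term decay. -/
def mixDecayRate (M c₁ c₂ : ℝ) : ℝ := (c₁ - c₂) ^ 2 / (2 * M)

theorem mixDecayRate_pos (hM : 0 < M) (hc : c₁ ≠ c₂) : 0 < mixDecayRate M c₁ c₂ := by
  have : c₁ - c₂ ≠ 0 := sub_ne_zero.2 hc
  unfold mixDecayRate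
  positivity

theorem integral_exp_mixExponent (hM : 0 < M) (hs : -1 < s) (hst : s < t) (x : ℝ) :
    ∫ y, Real.exp (mixExponent M c₁ c₂ x t s y) =
      √(Real.pi * M / 2) * √((1 + s) * (t - s) / (1 + t)) *
        (Real.exp (-(x + c₁ * t) ^ 2 / (M * (1 + t))) *
          Real.exp (-(x + c₁ * (t - s) + c₂ * s) ^ 2 / (M * (1 + t))) *
          Real.exp (-(mixDecayRate M c₁ c₂ * (s ^ 2 * (t - s) / ((1 + s) * (1 + t)))))) := by
  obtain ⟨τ, rfl⟩ : ∃ τ, t = s + τ := ⟨t - s, by ring⟩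
  rw [add_sub_cancel_left]
  have hσ : 0 < 1 + s := by linarith
  have hτ : 0 < τ := by linarith
  have hT : 0 < 1 + (s + τ) := by linarith
  set a := 2 / (M * τ) with ha
  set b := 2 / (M * (1 + s)) with hb
  have hab : a + b = 2 * (1 + (s + τ)) / (M * τ * (1 + s)) := by
    rw [ha, hb]
    field_simp
    ring
  have two_gaussians (y : ℝ) : mixExponent M c₁ c₂ x (s + τ) s y =
      (-a * (y - (x + c₁ * τ)) ^ 2 - b * (y - -((c₁ + c₂) / 2 * s)) ^ 2) +
        -(mixDecayRate M c₁ c₂ * s ^ 2 / (1 + s)) := by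
    rw [mixExponent, mixDecayRate, ha, hb, add_sub_cancel_left]
    field_simp
    ring
  simp_rw [two_gaussians, Real.exp_add]
  rw [integral_mul_const, integral_exp_neg_mul_sq_sub_mul_sq (by positivity), mul_assoc,
    ← Real.exp_add, ← Real.exp_add, ← Real.exp_add, hab, ← Real.sqrt_mul (by positivity)]
  congr 2
  · field_simp
  · rw [ha, hb, mixDecayRate]
    field_simp
    ring

theorem integral_mixTerm_le {α : ℝ} (hM : 0 < M) (hα : α ≤ 1) (hs : 0 < s) (hst : s < t) (x : ℝ) :
    ∫ y, Real.exp (mixExponent M c₁ c₂ x t s y) / ((1 + s) * (t - s) ^ α) ≤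
      √(Real.pi * M / 2) * Real.exp (2 * mixDecayRate M c₁ c₂) *
        Real.exp (-(x + c₁ * t) ^ 2 / (M * (1 + t))) / (1 + t) ^ α *
        decayProfile (mixDecayRate M c₁ c₂ / 2) (min s (t - s)) := by
  have hτ : 0 < t - s := sub_pos.2 hst
  have ht : 0 < 1 + t := by linarith
  have : 0 < min s (t - s) := lt_min hs hτ
  have hκ : 0 ≤ mixDecayRate M c₁ c₂ := by unfold mixDecayRate; positivity
  have h_decay := exp_neg_mul_sq_mul_sub_div_le hκ hs hst
  have h_drop : Real.exp (-(x + c₁ * (t - s) + c₂ * s) ^ 2 / (M * (1 + t))) ≤ 1 :=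
    Real.exp_le_one_iff.2 <|
      div_nonpos_of_nonpos_of_nonneg (neg_nonpos.2 (sq_nonneg _)) (by positivity)
  have h_weight : √((1 + s) * (t - s) / (1 + t)) / ((1 + s) * (t - s) ^ α) ≤
      (1 + (√(min s (t - s)))⁻¹) / (1 + t) ^ α := by
    have h_sum : 1 + s + (t - s) = 1 + t := by ring
    have := sqrt_mul_div_add_div_mul_rpow_le (σ := 1 + s) (by linarith) hτ hα
    rw [h_sum] at this
    refine this.trans ?_
    gcongr
    exact min_le_right _ _
  rw [integral_div, integral_exp_mixExponent hM (by linarith) hst, mul_div_right_comm,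
    mul_div_assoc]
  set E := Real.exp (-(x + c₁ * t) ^ 2 / (M * (1 + t)))
  set m := min s (t - s)
  set κ := mixDecayRate M c₁ c₂
  calc _ ≤ √(Real.pi * M / 2) * ((1 + (√m)⁻¹) / (1 + t) ^ α) *
        (E * 1 * (Real.exp (2 * κ) * Real.exp (-(κ / 2) * m))) := by gcongr
    _ = _ := by
        rw [decayProfile]
        ring

theorem bound_mix_term_integral_general {α : ℝ} (hM : 0 < M) (hc : c₁ ≠ c₂) (hα : α ≤ 1) :
    ∃ C : ℝ, 0 < C ∧ ∀ x t : ℝ, 0 ≤ t →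
      (∫ s in Ioo 0 t, ∫ y, Real.exp (mixExponent M c₁ c₂ x t s y) / ((1 + s) * (t - s) ^ α)) ≤
        C * Real.exp (-(x + c₁ * t) ^ 2 / (M * (1 + t))) / (1 + t) ^ α := by
  set κ := mixDecayRate M c₁ c₂
  have hκ : 0 < κ := mixDecayRate_pos hM hc
  set K := √(Real.pi * M / 2) * Real.exp (2 * κ)
  set G := ∫ u in Ioi 0, decayProfile (κ / 2) u
  have hG : 0 ≤ G := integral_nonneg (decayProfile_nonneg _)
  refine ⟨K * (2 * G + 1), by positivity, fun x t ht ↦ ?_⟩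
  set E := Real.exp (-(x + c₁ * t) ^ 2 / (M * (1 + t)))
  calc ∫ s in Ioo 0 t, ∫ y, Real.exp (mixExponent M c₁ c₂ x t s y) / ((1 + s) * (t - s) ^ α)
      ≤ 2 * ∫ u in Ioi 0, K * E / (1 + t) ^ α * decayProfile (κ / 2) u := by
        refine setIntegral_Ioo_le_of_le_comp_min
          ((integrableOn_decayProfile (half_pos hκ)).const_mul _)
          (fun u _ ↦ mul_nonneg (by positivity) (decayProfile_nonneg _ u))
          (fun s ⟨hs, hst⟩ ↦ integral_nonneg fun y ↦ ?_)
          (fun s ⟨hs, hst⟩ ↦ integral_mixTerm_le hM hα hs hst x)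
        have : 0 < t - s := sub_pos.2 hst
        positivity
    _ = K * (2 * G) * E / (1 + t) ^ α := by
        rw [integral_const_mul]
        ring
    _ ≤ K * (2 * G + 1) * E / (1 + t) ^ α := by
        gcongr
        linarith

end MixTerm

/-- Bound on the mix-term convolution integral `I_j`
(estimate (4.13) of the paper). -/
theorem bound_mix_term_integral
    (M c₁ c₂ : ℝ) (hM : 0 < M) (hc : c₁ ≠ c₂) (j : ℕ) (hj : j = 0 ∨ j = 1) :
    ∃ C : ℝ, 0 < C ∧ ∀ x t : ℝ, 0 ≤ t →
      (∫ s in Set.Ioo (0 : ℝ) t, ∫ y : ℝ,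
          Real.exp (-(2 * (x - y + c₁ * (t - s)) ^ 2) / (M * (t - s)) -
              (y + c₁ * s) ^ 2 / (M * (1 + s)) - (y + c₂ * s) ^ 2 / (M * (1 + s))) /
            ((1 + s) * (t - s) ^ ((1 + (j : ℝ)) / 2))) ≤
        C * Real.exp (-(x + c₁ * t) ^ 2 / (M * (1 + t))) /
          (1 + t) ^ ((1 + (j : ℝ)) / 2) :=
  bound_mix_term_integral_general hM hc (by rcases hj with rfl | rfl <;> norm_num)
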